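/- For every y ∈ ℝ² with ‖y‖ < R there exists η ∈ ℝ² such that ∇Λ(η) = y; and for every η ∈ ℝ², Λ*(∇Λ(η)) = ⟨η, ∇Λ(η)⟩ − Λ(η). -/

import Mathlib

open MeasureTheory Set Filter Topology
open scoped ENNReal RealInnerProductSpace

noncomputable section

/-- The Euclidean plane. -/
abbrev E2 := EuclideanSpace ℝ (Fin 2)

/-- The uniform probability measure on a set `A` (normalized Lebesgue measure). -/
def uniformOn {α : Type*} [MeasureSpace α] (A : Set α) : Measure α :=
  (volume A)⁻¹ • volume.restrict A

/-- The logarithmic moment generating function `Λ` of the uniform probability measure on the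
open disk of radius `R` centered at the origin. -/
def logMGF (R : ℝ) (η : E2) : ℝ :=
  Real.log (∫ x, Real.exp (⟪x, η⟫) ∂(uniformOn (Metric.ball (0 : E2) R)))

/-- The Fenchel–Legendre transform `Λ*` of `logMGF R`, valued in `[0,∞]`.  Since the supremum
includes `η = 0` (where the value is `0`), truncating negative values does not change it. -/
def lambdaStar (R : ℝ) (y : E2) : ℝ≥0∞ :=
  ⨆ η : E2, ENNReal.ofReal (⟪y, η⟫ - logMGF R η)

section ExpInner

variable {E : Type*} [NormedAddCommGroup E] [InnerProductSpace ℝ E] {R : ℝ}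

theorem exp_inner_le_exp_mul {x η : E} {S : ℝ} (hR : 0 ≤ R) (hx : ‖x‖ ≤ R) (hη : ‖η‖ ≤ S) :
    Real.exp ⟪x, η⟫ ≤ Real.exp (R * S) :=
  Real.exp_le_exp.2 ((real_inner_le_norm x η).trans
    (mul_le_mul hx hη (norm_nonneg η) hR))

theorem norm_exp_inner_smul_innerSL_le {x η : E} {S : ℝ} (hR : 0 ≤ R) (hx : ‖x‖ ≤ R)
    (hη : ‖η‖ ≤ S) : ‖Real.exp ⟪x, η⟫ • innerSL ℝ x‖ ≤ Real.exp (R * S) * R := by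
  rw [norm_smul, innerSL_apply_norm, Real.norm_of_nonneg (Real.exp_pos _).le]
  exact mul_le_mul (exp_inner_le_exp_mul hR hx hη) hx (norm_nonneg x) (Real.exp_pos _).le

variable [FiniteDimensional ℝ E] [MeasurableSpace E] [BorelSpace E] {μ : Measure E}

theorem integrable_exp_inner [IsFiniteMeasure μ] (hR : 0 ≤ R) (hμ : ∀ᵐ x ∂μ, ‖x‖ ≤ R) (η : E) :
    Integrable (fun x ↦ Real.exp ⟪x, η⟫) μ := by
  refine Integrable.of_bound (C := Real.exp (R * ‖η‖))
    (by fun_prop) ?_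
  filter_upwards [hμ] with x hx
  rw [Real.norm_of_nonneg (Real.exp_pos _).le]
  exact exp_inner_le_exp_mul hR hx le_rfl

theorem integrable_exp_inner_smul_innerSL [IsFiniteMeasure μ] (hR : 0 ≤ R)
    (hμ : ∀ᵐ x ∂μ, ‖x‖ ≤ R) (η : E) :
    Integrable (fun x ↦ Real.exp ⟪x, η⟫ • innerSL ℝ x) μ := by
  refine Integrable.of_bound (C := Real.exp (R * ‖η‖) * R)
    (Continuous.aestronglyMeasurable (by fun_prop)) ?_
  filter_upwards [hμ] with x hx
  exact norm_exp_inner_smul_innerSL_le hR hx le_rfl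

theorem hasFDerivAt_integral_exp_inner [IsFiniteMeasure μ] (hR : 0 ≤ R)
    (hμ : ∀ᵐ x ∂μ, ‖x‖ ≤ R) (η : E) :
    HasFDerivAt (fun ξ ↦ ∫ x, Real.exp ⟪x, ξ⟫ ∂μ)
      (∫ x, Real.exp ⟪x, η⟫ • innerSL ℝ x ∂μ) η := by
  refine hasFDerivAt_integral_of_dominated_of_fderiv_le
    (F' := fun ξ x ↦ Real.exp ⟪x, ξ⟫ • innerSL ℝ x)
    (bound := fun _ ↦ Real.exp (R * (‖η‖ + 1)) * R)
    (Metric.ball_mem_nhds η one_pos)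
    (Eventually.of_forall fun ξ ↦ (integrable_exp_inner hR hμ ξ).aestronglyMeasurable)
    (integrable_exp_inner hR hμ η)
    (integrable_exp_inner_smul_innerSL hR hμ η).aestronglyMeasurable ?_
    (integrable_const _) ?_
  · filter_upwards [hμ] with x hx ξ hξ
    refine norm_exp_inner_smul_innerSL_le hR hx ?_
    have h₁ : ‖ξ - η‖ < 1 := mem_ball_iff_norm.1 hξ
    have h₂ := norm_le_norm_add_norm_sub' ξ η
    linarith
  · exact Eventually.of_forall fun x ξ _ ↦ ((innerSL ℝ x).hasFDerivAt (x := ξ)).exp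

theorem integral_exp_inner_pos [IsFiniteMeasure μ] [NeZero μ] (hR : 0 ≤ R)
    (hμ : ∀ᵐ x ∂μ, ‖x‖ ≤ R) (η : E) : 0 < ∫ x, Real.exp ⟪x, η⟫ ∂μ :=
  integral_exp_pos (integrable_exp_inner hR hμ η)

theorem hasFDerivAt_log_integral_exp_inner [IsFiniteMeasure μ] [NeZero μ] (hR : 0 ≤ R)
    (hμ : ∀ᵐ x ∂μ, ‖x‖ ≤ R) (η : E) :
    HasFDerivAt (fun ξ ↦ Real.log (∫ x, Real.exp ⟪x, ξ⟫ ∂μ))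
      ((∫ x, Real.exp ⟪x, η⟫ ∂μ)⁻¹ • ∫ x, Real.exp ⟪x, η⟫ • innerSL ℝ x ∂μ) η :=
  (hasFDerivAt_integral_exp_inner hR hμ η).log (ne_of_gt (integral_exp_inner_pos hR hμ η))

/-- The log-moment generating function lies above its tangent planes. -/
theorem log_integral_exp_inner_add_fderiv_le [IsFiniteMeasure μ] [NeZero μ] (hR : 0 ≤ R)
    (hμ : ∀ᵐ x ∂μ, ‖x‖ ≤ R) (η ξ : E) :
    Real.log (∫ x, Real.exp ⟪x, η⟫ ∂μ) +
      fderiv ℝ (fun ζ ↦ Real.log (∫ x, Real.exp ⟪x, ζ⟫ ∂μ)) η (ξ - η) ≤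
      Real.log (∫ x, Real.exp ⟪x, ξ⟫ ∂μ) := by
  rw [(hasFDerivAt_log_integral_exp_inner hR hμ η).fderiv]
  have hL := integrable_exp_inner_smul_innerSL hR hμ η
  have hη := integrable_exp_inner hR hμ η
  have hZ := integral_exp_inner_pos hR hμ η
  have hderiv : (∫ x, Real.exp ⟪x, η⟫ • innerSL ℝ x ∂μ) (ξ - η) =
      ∫ x, Real.exp ⟪x, η⟫ * ⟪x, ξ - η⟫ ∂μ := by
    rw [ContinuousLinearMap.integral_apply hL]
    simp
  have hint : Integrable (fun x ↦ Real.exp ⟪x, η⟫ * ⟪x, ξ - η⟫) μ := by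
    simpa using hL.apply_continuousLinearMap (ξ - η)
  rw [smul_apply, hderiv, smul_eq_mul]
  set Z := ∫ x, Real.exp ⟪x, η⟫ ∂μ
  set D := ∫ x, Real.exp ⟪x, η⟫ * ⟪x, ξ - η⟫ ∂μ
  set c := Z⁻¹ * D
  have hD : D = Z * c := by simp [c, hZ.ne']
  rw [Real.le_log_iff_exp_le (integral_exp_inner_pos hR hμ ξ), Real.exp_add, Real.exp_log hZ]
  calc Z * Real.exp c
      = ∫ x, Real.exp c * (Real.exp ⟪x, η⟫ * ⟪x, ξ - η⟫ + (1 - c) * Real.exp ⟪x, η⟫) ∂μ := by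
        rw [integral_const_mul, integral_add hint (hη.const_mul _), integral_const_mul]
        change _ = Real.exp c * (D + (1 - c) * Z)
        rw [hD]
        ring
    _ ≤ ∫ x, Real.exp ⟪x, ξ⟫ ∂μ := by
        refine integral_mono ((hint.add (hη.const_mul _)).const_mul _)
          (integrable_exp_inner hR hμ ξ) fun x ↦ ?_
        have hsplit : ⟪x, ξ⟫ = c + ⟪x, η⟫ + (⟪x, ξ - η⟫ - c) := by
          rw [inner_sub_right]
          ring
        have hexp := Real.add_one_le_exp (⟪x, ξ - η⟫ - c)
        have hpos := mul_pos (Real.exp_pos c) (Real.exp_pos ⟪x, η⟫)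
        change Real.exp c * (Real.exp ⟪x, η⟫ * ⟪x, ξ - η⟫ + (1 - c) * Real.exp ⟪x, η⟫) ≤
          Real.exp ⟪x, ξ⟫
        rw [hsplit, Real.exp_add, Real.exp_add]
        nlinarith [mul_le_mul_of_nonneg_left hexp hpos.le]

theorem mul_exp_le_integral_exp_inner [IsFiniteMeasure μ] (hR : 0 ≤ R) (hμ : ∀ᵐ x ∂μ, ‖x‖ ≤ R)
    (z η : E) (r : ℝ) :
    μ.real (Metric.ball z r) * Real.exp (⟪z, η⟫ - r * ‖η‖) ≤ ∫ x, Real.exp ⟪x, η⟫ ∂μ := by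
  have hint := integrable_exp_inner hR hμ η
  have hball : ∀ x ∈ Metric.ball z r, Real.exp (⟪z, η⟫ - r * ‖η‖) ≤ Real.exp ⟪x, η⟫ := by
    intro x hx
    refine Real.exp_le_exp.2 ?_
    have h₁ : ‖z - x‖ < r := by rwa [mem_ball_iff_norm'] at hx
    have h₂ := real_inner_le_norm (z - x) η
    rw [inner_sub_left] at h₂
    nlinarith [norm_nonneg η]
  rw [mul_comm]
  exact (setIntegral_ge_of_const_le_real measurableSet_ball (measure_ne_top μ _) hball
    hint.integrableOn).trans
    (setIntegral_le_integral hint (Eventually.of_forall fun x ↦ (Real.exp_pos _).le))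

end ExpInner

theorem isProbabilityMeasure_uniformOn {α : Type*} [MeasureSpace α] {A : Set α}
    (h₀ : volume A ≠ 0) (h : volume A ≠ ∞) : IsProbabilityMeasure (uniformOn A) :=
  ⟨by simp [uniformOn, ENNReal.inv_mul_cancel h₀ h]⟩

theorem isProbabilityMeasure_uniformOn_ball {R : ℝ} (hR : 0 < R) :
    IsProbabilityMeasure (uniformOn (Metric.ball (0 : E2) R)) :=
  isProbabilityMeasure_uniformOn (Metric.measure_ball_pos _ _ hR).ne' measure_ball_lt_top.ne

theorem ae_norm_le_uniformOn_ball (R : ℝ) :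
    ∀ᵐ x ∂(uniformOn (Metric.ball (0 : E2) R)), ‖x‖ ≤ R := by
  refine Measure.ae_smul_measure ?_ _
  filter_upwards [ae_restrict_mem measurableSet_ball] with x hx
  exact (mem_ball_zero_iff.1 hx).le

theorem uniformOn_ball_real_ball {R r : ℝ} {z : E2} (h : ‖z‖ + r ≤ R) :
    (uniformOn (Metric.ball (0 : E2) R)).real (Metric.ball z r) =
      (volume.real (Metric.ball (0 : E2) R))⁻¹ * volume.real (Metric.ball (0 : E2) r) := by
  have hsub : Metric.ball z r ⊆ Metric.ball 0 R :=
    Metric.ball_subset_ball' (by rw [dist_zero_right]; linarith)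
  simp only [uniformOn, measureReal_ennreal_smul_apply, ENNReal.toReal_inv]
  rw [measureReal_restrict_apply measurableSet_ball, inter_eq_left.2 hsub,
    Measure.addHaar_real_ball_center]
  rfl

/-- Every slope smaller than `R` bounds the growth of `logMGF R` from below. -/
theorem exists_mul_norm_sub_le_logMGF {R a : ℝ} (hR : 0 < R) (ha : a < R) :
    ∃ C, ∀ η, a * ‖η‖ - C ≤ logMGF R η := by
  have := isProbabilityMeasure_uniformOn_ball hR
  obtain ⟨r, hr, hrR, hra⟩ : ∃ r > 0, r ≤ R ∧ a ≤ R - 2 * r := by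
    rcases le_total 0 a with h | h
    · exact ⟨(R - a) / 2, by linarith, by linarith, by linarith⟩
    · exact ⟨R / 2, by linarith, by linarith, by linarith⟩
  set m := (volume.real (Metric.ball (0 : E2) R))⁻¹ * volume.real (Metric.ball (0 : E2) r)
  have hm : 0 < m := mul_pos
    (inv_pos.2 (ENNReal.toReal_pos (Metric.measure_ball_pos _ _ hR).ne' measure_ball_lt_top.ne))
    (ENNReal.toReal_pos (Metric.measure_ball_pos _ _ hr).ne' measure_ball_lt_top.ne)
  refine ⟨-Real.log m, fun η ↦ ?_⟩
  obtain ⟨z, hz, hzη⟩ : ∃ z : E2, ‖z‖ ≤ R - r ∧ ⟪z, η⟫ = (R - r) * ‖η‖ := by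
    rcases eq_or_ne η 0 with rfl | hη
    · exact ⟨0, by simpa using hrR, by simp⟩
    · have hη' := norm_ne_zero_iff.2 hη
      refine ⟨((R - r) * ‖η‖⁻¹) • η, ?_, ?_⟩
      · rw [norm_smul, norm_mul, norm_inv, norm_norm, mul_assoc, inv_mul_cancel₀ hη', mul_one,
          Real.norm_of_nonneg (by linarith)]
      · rw [real_inner_smul_left, real_inner_self_eq_norm_sq]
        field_simp
  have hle := mul_exp_le_integral_exp_inner hR.le (ae_norm_le_uniformOn_ball R) z η r
  rw [uniformOn_ball_real_ball (by linarith), hzη] at hle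
  have hlog := Real.log_le_log (mul_pos hm (Real.exp_pos _)) hle
  rw [Real.log_mul hm.ne' (Real.exp_pos _).ne', Real.log_exp] at hlog
  change _ ≤ logMGF R η at hlog
  nlinarith [norm_nonneg η]

theorem differentiable_logMGF {R : ℝ} (hR : 0 < R) : Differentiable ℝ (logMGF R) := by
  have := isProbabilityMeasure_uniformOn_ball hR
  exact fun η ↦ (hasFDerivAt_log_integral_exp_inner hR.le
    (ae_norm_le_uniformOn_ball R) η).differentiableAt

theorem exists_gradient_logMGF_eq {R : ℝ} (hR : 0 < R) {y : E2} (hy : ‖y‖ < R) :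
    ∃ η, gradient (logMGF R) η = y := by
  obtain ⟨a, hya, haR⟩ := exists_between hy
  obtain ⟨C, hC⟩ := exists_mul_norm_sub_le_logMGF hR haR
  have hdiff := differentiable_logMGF hR
  have htop : Tendsto (fun η ↦ logMGF R η - ⟪y, η⟫) (cocompact E2) atTop := by
    have hlin : Tendsto (fun η : E2 ↦ (a - ‖y‖) * ‖η‖ + -C) (cocompact E2) atTop :=
      tendsto_atTop_add_const_right _ _
        (tendsto_norm_cocompact_atTop.const_mul_atTop (sub_pos.2 hya))
    refine tendsto_atTop_mono (fun η ↦ ?_) hlin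
    linarith [hC η, real_inner_le_norm y η]
  obtain ⟨η, hη⟩ := (hdiff.continuous.sub (by fun_prop)).exists_forall_le htop
  refine ⟨η, ?_⟩
  have hzero := IsLocalMin.hasFDerivAt_eq_zero (Eventually.of_forall hη)
    ((hdiff η).hasFDerivAt.sub ((innerSL ℝ y).hasFDerivAt (x := η)))
  refine ext_inner_right ℝ fun v ↦ ?_
  rw [inner_gradient_left, sub_eq_zero.1 hzero, innerSL_apply_apply]

theorem lambdaStar_gradient_logMGF {R : ℝ} (hR : 0 < R) (η : E2) :
    lambdaStar R (gradient (logMGF R) η) =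
      ENNReal.ofReal (⟪η, gradient (logMGF R) η⟫ - logMGF R η) := by
  have := isProbabilityMeasure_uniformOn_ball hR
  rw [real_inner_comm]
  refine le_antisymm (iSup_le fun ξ ↦ ENNReal.ofReal_le_ofReal ?_) (le_iSup_of_le η le_rfl)
  have h : logMGF R η + fderiv ℝ (logMGF R) η (ξ - η) ≤ logMGF R ξ :=
    log_integral_exp_inner_add_fderiv_le hR.le (ae_norm_le_uniformOn_ball R) η ξ
  rw [← inner_gradient_left, inner_sub_right] at h
  linarith

/-- Every point of the open disk of radius `R` is a value of `∇Λ`, and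
`Λ*(∇Λ(η)) = ⟨η, ∇Λ(η)⟩ − Λ(η)` for every `η`. -/
theorem statement5 (R : ℝ) (hR : 0 < R) :
    (∀ y : E2, ‖y‖ < R → ∃ η : E2, gradient (logMGF R) η = y) ∧
    (∀ η : E2, lambdaStar R (gradient (logMGF R) η) =
      ENNReal.ofReal (⟪η, gradient (logMGF R) η⟫ - logMGF R η)) :=
  ⟨fun _ hy ↦ exists_gradient_logMGF_eq hR hy, lambdaStar_gradient_logMGF hR⟩
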